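/- Let C be an abelian category. For any class ξ of short exact sequences closed under isomorphism, define E_ξ(C,A) = {δ ∈ Ext^1(C,A) : some sequence in ξ realizes δ}. Then the assignment ξ ↦ E_ξ gives a bijection between proper classes of short exact sequences (classes containing all split sequences, closed under finite direct sums, and closed under base change and cobase change) and additive subfunctors of Ext^1. -/

import Mathlib

open CategoryTheory CategoryTheory.Limits CategoryTheory.Abelian

universe w v u

variable {C : Type u} [Category.{v} C] [Abelian C] [HasExt.{w} C]

/-- An additive subfunctor of `Ext¹`, given by a set of extension classes in each
`Ext Z A 1`, which is an additive subgroup stable under pushout (composition with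
`Ext.mk₀ a` on the right) and pullback (composition with `Ext.mk₀ c` on the left). -/
structure IsAddSubfunctor (F : ∀ Z A : C, Set (Ext Z A 1)) : Prop where
  zero_mem : ∀ Z A : C, (0 : Ext Z A 1) ∈ F Z A
  add_mem : ∀ (Z A : C), ∀ δ₁ ∈ F Z A, ∀ δ₂ ∈ F Z A, δ₁ + δ₂ ∈ F Z A
  neg_mem : ∀ (Z A : C), ∀ δ ∈ F Z A, -δ ∈ F Z A
  push : ∀ (Z A A' : C) (a : A ⟶ A'), ∀ δ ∈ F Z A, δ.comp (Ext.mk₀ a) (add_zero 1) ∈ F Z A'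
  pull : ∀ (Z Z' A : C) (c : Z' ⟶ Z), ∀ δ ∈ F Z A, (Ext.mk₀ c).comp δ (zero_add 1) ∈ F Z' A

/-- `f` is an `F`-inflation if it is the mono of a short exact sequence whose
extension class lies in `F`. -/
def IsFInflation (F : ∀ Z A : C, Set (Ext Z A 1)) {A B : C} (f : A ⟶ B) : Prop :=
  ∃ (Z : C) (g : B ⟶ Z) (w : f ≫ g = 0) (hS : (ShortComplex.mk f g w).ShortExact),
    hS.extClass ∈ F Z A

/-- `g` is an `F`-deflation if it is the epi of a short exact sequence whose
extension class lies in `F`. -/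
def IsFDeflation (F : ∀ Z A : C, Set (Ext Z A 1)) {B Z : C} (g : B ⟶ Z) : Prop :=
  ∃ (A : C) (f : A ⟶ B) (w : f ≫ g = 0) (hS : (ShortComplex.mk f g w).ShortExact),
    hS.extClass ∈ F Z A

/-- The classes in `Ext Z A 1` realized by some short exact sequence in `ξ`. -/
def EClass (ξ : Set (ShortComplex C)) (Z A : C) : Set (Ext Z A 1) :=
  {δ | ∃ (B : C) (f : A ⟶ B) (g : B ⟶ Z) (w : f ≫ g = 0)
      (hS : (ShortComplex.mk f g w).ShortExact),
      ShortComplex.mk f g w ∈ ξ ∧ hS.extClass = δ}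

/-- A proper class of short exact sequences: closed under isomorphism, consisting
of short exact sequences, containing all split short exact sequences, closed under
finite direct sums, and closed under base change and cobase change. -/
structure IsProperClass (ξ : Set (ShortComplex C)) : Prop where
  shortExact : ∀ S ∈ ξ, S.ShortExact
  iso_closed : ∀ S ∈ ξ, ∀ S' : ShortComplex C, Nonempty (S ≅ S') → S' ∈ ξ
  split_mem : ∀ S : ShortComplex C, Nonempty S.Splitting → S ∈ ξ
  sum_mem : ∀ S ∈ ξ, ∀ T ∈ ξ,
    ShortComplex.mk (biprod.map S.f T.f) (biprod.map S.g T.g)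
      (by ext <;> simp [S.zero, T.zero]) ∈ ξ
  base_change : ∀ (Z A : C), ∀ δ ∈ EClass ξ Z A, ∀ (Z' : C) (c : Z' ⟶ Z),
    (Ext.mk₀ c).comp δ (zero_add 1) ∈ EClass ξ Z' A
  cobase_change : ∀ (Z A : C), ∀ δ ∈ EClass ξ Z A, ∀ (A' : C) (a : A ⟶ A'),
    δ.comp (Ext.mk₀ a) (add_zero 1) ∈ EClass ξ Z A'

/-! `ξ ↦ E_ξ` is inverse to `F ↦ {S short exact | [S] ∈ F}`. A class `δ : Z ⟶ A[1]` in the derived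
category is realized by completing it to a triangle, whose middle term lies in the heart. Two
sequences with the same class are isomorphic, since a morphism of triangles between objects of the
heart is a morphism of short complexes. The class of `S ⊞ T` is the sum of the classes of `S` and
`T` transported to `S.X₃ ⊞ T.X₃` and `S.X₁ ⊞ T.X₁`, so that closure under direct sums, base change
and cobase change gives closure under the Baer sum, by pulling back along the diagonal and pushing
out along the codiagonal.
-/

section DerivedCategory

open Pretriangulated DerivedCategory

universe w'

variable {D : Type u} [Category.{v} D] [Abelian D] [HasDerivedCategory.{w'} D]

lemma exists_distTriang_singleFunctor {A Z : D}
    (δ : (singleFunctor D 0).obj Z ⟶ ((singleFunctor D 0).obj A)⟦(1 : ℤ)⟧) :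
    ∃ (B : D) (f : A ⟶ B) (g : B ⟶ Z),
      Triangle.mk ((singleFunctor D 0).map f) ((singleFunctor D 0).map g) δ ∈
        distTriang (DerivedCategory D) := by
  obtain ⟨X, a, b, hT⟩ := distinguished_cocone_triangle₂ δ
  have hLE : X.IsLE 0 := TStructure.t.isLE₂ _ hT 0
    (inferInstanceAs (((singleFunctor D 0).obj A).IsLE 0))
    (inferInstanceAs (((singleFunctor D 0).obj Z).IsLE 0))
  have hGE : X.IsGE 0 := TStructure.t.isGE₂ _ hT 0
    (inferInstanceAs (((singleFunctor D 0).obj A).IsGE 0))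
    (inferInstanceAs (((singleFunctor D 0).obj Z).IsGE 0))
  obtain ⟨B, ⟨e⟩⟩ := exists_iso_singleFunctor_obj_of_isGE_of_isLE X 0
  obtain ⟨f, hf⟩ := (singleFunctor D 0).map_surjective (a ≫ e.hom)
  obtain ⟨g, hg⟩ := (singleFunctor D 0).map_surjective (e.inv ≫ b)
  refine ⟨B, f, g, isomorphic_distinguished _ hT _ ?_⟩
  exact Triangle.isoMk _ _ (Iso.refl _) e.symm (Iso.refl _)
    (by simp [Triangle.mk, hf]) (by simp [Triangle.mk, hg]) (by simp [Triangle.mk])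

lemma comp_eq_zero_of_distTriang_singleFunctor {A B Z : D} {f : A ⟶ B} {g : B ⟶ Z}
    {δ : (singleFunctor D 0).obj Z ⟶ ((singleFunctor D 0).obj A)⟦(1 : ℤ)⟧}
    (hT : Triangle.mk ((singleFunctor D 0).map f) ((singleFunctor D 0).map g) δ ∈
      distTriang (DerivedCategory D)) : f ≫ g = 0 :=
  (singleFunctor D 0).map_injective (by simpa using! comp_distTriang_mor_zero₁₂ _ hT)

lemma shortExact_of_distTriang_singleFunctor {S : ShortComplex D}
    {δ : (singleFunctor D 0).obj S.X₃ ⟶ ((singleFunctor D 0).obj S.X₁)⟦(1 : ℤ)⟧}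
    (hT : Triangle.mk ((singleFunctor D 0).map S.f) ((singleFunctor D 0).map S.g) δ ∈
      distTriang (DerivedCategory D)) : S.ShortExact := by
  let e : S.map (singleFunctor D 0 ⋙ homologyFunctor D 0) ≅ S :=
    S.mapNatIso (singleFunctorCompHomologyFunctorIso D 0)
  have hX₃ : IsZero ((homologyFunctor D (-1)).obj ((singleFunctor D 0).obj S.X₃)) :=
    isZero_of_isGE _ 0 (-1) (by lia)
  have hX₁ : IsZero ((homologyFunctor D 1).obj ((singleFunctor D 0).obj S.X₁)) :=
    isZero_of_isLE _ 0 1 (by lia)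
  exact ShortComplex.shortExact_of_iso e
    { exact := HomologySequence.exact₂ _ hT 0
      mono_f := (HomologySequence.mono_homologyMap_mor₁_iff _ hT (-1) 0 (by lia)).2
        (hX₃.eq_of_src _ _)
      epi_g := (HomologySequence.epi_homologyMap_mor₂_iff _ hT 0 1 (by lia)).2
        (hX₁.eq_of_tgt _ _) }

lemma singleδ_eq_of_distTriang_singleFunctor {S : ShortComplex D} (hS : S.ShortExact)
    {δ : (singleFunctor D 0).obj S.X₃ ⟶ ((singleFunctor D 0).obj S.X₁)⟦(1 : ℤ)⟧}
    (hT : Triangle.mk ((singleFunctor D 0).map S.f) ((singleFunctor D 0).map S.g) δ ∈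
      distTriang (DerivedCategory D)) : hS.singleδ = δ := by
  have := hS.epi_g
  obtain ⟨c, hgc, hδc⟩ : ∃ c : (singleFunctor D 0).obj S.X₃ ⟶ (singleFunctor D 0).obj S.X₃,
      (singleFunctor D 0).map S.g ≫ c = (singleFunctor D 0).map S.g ∧ δ = c ≫ hS.singleδ := by
    simpa [Triangle.mk, ShortComplex.ShortExact.singleTriangle] using
      complete_distinguished_triangle_morphism _ _ hT hS.singleTriangle_distinguished
        (𝟙 _) (𝟙 _) (by simp [Triangle.mk, ShortComplex.ShortExact.singleTriangle])
  obtain ⟨c, rfl⟩ := (singleFunctor D 0).map_surjective c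
  have hc : c = 𝟙 S.X₃ := by
    rw [← cancel_epi S.g]
    exact (singleFunctor D 0).map_injective (by simpa using hgc)
  simp [hδc, hc]

end DerivedCategory

lemma exists_shortExact_extClass_eq {Z A : C} (δ : Ext Z A 1) :
    ∃ (B : C) (f : A ⟶ B) (g : B ⟶ Z) (w : f ≫ g = 0)
      (hS : (ShortComplex.mk f g w).ShortExact), hS.extClass = δ := by
  let := HasDerivedCategory.standard C
  obtain ⟨B, f, g, hT⟩ := exists_distTriang_singleFunctor δ.hom
  have w := comp_eq_zero_of_distTriang_singleFunctor hT
  have hS : (ShortComplex.mk f g w).ShortExact := shortExact_of_distTriang_singleFunctor hT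
  refine ⟨B, f, g, w, hS, ?_⟩
  ext
  rw [hS.extClass_hom, singleδ_eq_of_distTriang_singleFunctor hS hT]

lemma exists_hom_of_extClass_comp_eq {S S' : ShortComplex C} (hS : S.ShortExact)
    (hS' : S'.ShortExact) (α : S.X₁ ⟶ S'.X₁) (γ : S.X₃ ⟶ S'.X₃)
    (h : hS.extClass.comp (Ext.mk₀ α) (add_zero 1) =
      (Ext.mk₀ γ).comp hS'.extClass (zero_add 1)) :
    ∃ φ : S ⟶ S', φ.τ₁ = α ∧ φ.τ₃ = γ := by
  let := HasDerivedCategory.standard C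
  let ι := DerivedCategory.singleFunctor C 0
  have hδ : hS.singleδ ≫ (ι.map α)⟦(1 : ℤ)⟧' = ι.map γ ≫ hS'.singleδ := by
    simpa [ι, Ext.comp_hom, ShiftedHom.comp_mk₀, ShiftedHom.mk₀_comp] using
      congrArg Ext.hom h
  obtain ⟨b, hb₁, hb₂⟩ := Pretriangulated.complete_distinguished_triangle_morphism₂ _ _
    hS.singleTriangle_distinguished hS'.singleTriangle_distinguished _ _ hδ
  obtain ⟨β, rfl⟩ := ι.map_surjective b
  exact ⟨{ τ₁ := α
           τ₂ := β
           τ₃ := γ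
           comm₁₂ := ι.map_injective (by simpa using! hb₁.symm)
           comm₂₃ := ι.map_injective (by simpa using! hb₂.symm) }, rfl, rfl⟩

lemma nonempty_iso_of_extClass_eq {A B B' Z : C} {f : A ⟶ B} {g : B ⟶ Z} {w : f ≫ g = 0}
    {f' : A ⟶ B'} {g' : B' ⟶ Z} {w' : f' ≫ g' = 0}
    (hS : (ShortComplex.mk f g w).ShortExact) (hS' : (ShortComplex.mk f' g' w').ShortExact)
    (h : hS.extClass = hS'.extClass) :
    Nonempty (ShortComplex.mk f g w ≅ ShortComplex.mk f' g' w') := by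
  obtain ⟨φ, h₁, h₃⟩ := exists_hom_of_extClass_comp_eq hS hS' (𝟙 A) (𝟙 Z) (by simp [h])
  have : IsIso φ.τ₁ := h₁ ▸ inferInstanceAs (IsIso (𝟙 A))
  have : IsIso φ.τ₃ := h₃ ▸ inferInstanceAs (IsIso (𝟙 Z))
  have := ShortComplex.isIso₂_of_shortExact_of_isIso₁₃ φ hS hS'
  have := ShortComplex.isIso_of_isIso φ
  exact ⟨asIso φ⟩

lemma extClass_eq_of_iso {S S' : ShortComplex C} (hS : S.ShortExact) (hS' : S'.ShortExact)
    (e : S ≅ S') :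
    hS'.extClass = (Ext.mk₀ e.inv.τ₃).comp
      (hS.extClass.comp (Ext.mk₀ e.hom.τ₁) (add_zero 1)) (zero_add 1) := by
  rw [hS.extClass_naturality hS' e.hom, Ext.mk₀_comp_mk₀_assoc, ← ShortComplex.comp_τ₃,
    e.inv_hom_id, ShortComplex.id_τ₃, Ext.mk₀_id_comp]

lemma extClass_eq_zero_of_splitting {S : ShortComplex C} (hS : S.ShortExact)
    (s : S.Splitting) : hS.extClass = 0 := by
  have h := hS.extClass_comp_assoc (γ := Ext.mk₀ s.r) (h := add_zero 1)
  rwa [Ext.mk₀_comp_mk₀, s.f_r, Ext.comp_mk₀_id] at h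

section DirectSum

variable {D : Type u} [Category.{v} D] [Abelian D]

/-- The direct sum of two short complexes, in the form in which it occurs in
`IsProperClass.sum_mem`. -/
noncomputable abbrev directSum (S T : ShortComplex D) : ShortComplex D :=
  ShortComplex.mk (biprod.map S.f T.f) (biprod.map S.g T.g) (by ext <;> simp)

lemma shortExact_directSum {S T : ShortComplex D} (hS : S.ShortExact) (hT : T.ShortExact) :
    (directSum S T).ShortExact := by
  have := hS.mono_f
  have := hT.mono_f
  have := hS.epi_g
  have := hT.epi_g
  refine .mk' (ShortComplex.exact_of_f_is_kernel _ ?_) inferInstance inferInstance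
  refine KernelFork.IsLimit.ofι' _ _ fun k hk ↦ ?_
  have hkS : (k ≫ biprod.fst) ≫ S.g = 0 := by simpa using congrArg (· ≫ biprod.fst) hk
  have hkT : (k ≫ biprod.snd) ≫ T.g = 0 := by simpa using congrArg (· ≫ biprod.snd) hk
  exact ⟨biprod.lift (hS.exact.lift _ hkS) (hT.exact.lift _ hkT), by ext <;> simp⟩

lemma extClass_directSum {S T : ShortComplex C} (hS : S.ShortExact) (hT : T.ShortExact) :
    (shortExact_directSum hS hT).extClass =
      (Ext.mk₀ biprod.fst).comp
        (hS.extClass.comp (Ext.mk₀ biprod.inl) (add_zero 1)) (zero_add 1) +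
      (Ext.mk₀ biprod.snd).comp
        (hT.extClass.comp (Ext.mk₀ biprod.inr) (add_zero 1)) (zero_add 1) := by
  have hST := shortExact_directSum hS hT
  let inl : S ⟶ directSum S T := { τ₁ := biprod.inl, τ₂ := biprod.inl, τ₃ := biprod.inl }
  let inr : T ⟶ directSum S T := { τ₁ := biprod.inr, τ₂ := biprod.inr, τ₃ := biprod.inr }
  have hinl : hS.extClass.comp (Ext.mk₀ biprod.inl) (add_zero 1) =
      (Ext.mk₀ biprod.inl).comp hST.extClass (zero_add 1) := hS.extClass_naturality hST inl
  have hinr : hT.extClass.comp (Ext.mk₀ biprod.inr) (add_zero 1) =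
      (Ext.mk₀ biprod.inr).comp hST.extClass (zero_add 1) := hT.extClass_naturality hST inr
  rw [hinl, hinr, Ext.mk₀_comp_mk₀_assoc, Ext.mk₀_comp_mk₀_assoc, ← Ext.add_comp,
    ← Ext.mk₀_add, biprod.total]
  exact (Ext.mk₀_id_comp _).symm

lemma extClass_add_extClass {A B B' Z : C} {f : A ⟶ B} {g : B ⟶ Z} {w : f ≫ g = 0}
    {f' : A ⟶ B'} {g' : B' ⟶ Z} {w' : f' ≫ g' = 0}
    (hS : (ShortComplex.mk f g w).ShortExact) (hT : (ShortComplex.mk f' g' w').ShortExact) :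
    hS.extClass + hT.extClass =
      ((Ext.mk₀ (biprod.lift (𝟙 Z) (𝟙 Z))).comp
        (shortExact_directSum hS hT).extClass (zero_add 1)).comp
          (Ext.mk₀ (biprod.desc (𝟙 A) (𝟙 A))) (add_zero 1) := by
  simp [extClass_directSum hS hT]

end DirectSum

/-- The class of short exact sequences whose extension class lies in `F`; it is the inverse of
`ξ ↦ EClass ξ`. -/
def shortExactClass (F : ∀ Z A : C, Set (Ext Z A 1)) : Set (ShortComplex C) :=
  {S | ∃ hS : S.ShortExact, hS.extClass ∈ F S.X₃ S.X₁}

lemma EClass_shortExactClass (F : ∀ Z A : C, Set (Ext Z A 1)) :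
    EClass (shortExactClass F) = F := by
  ext Z A δ
  constructor
  · rintro ⟨B, f, g, w, hS, ⟨_, hF⟩, rfl⟩
    exact hF
  · intro hδ
    obtain ⟨B, f, g, w, hS, rfl⟩ := exists_shortExact_extClass_eq δ
    exact ⟨B, f, g, w, hS, ⟨hS, hδ⟩, rfl⟩

lemma extClass_mem_EClass_iff {ξ : Set (ShortComplex C)}
    (hξ : ∀ S ∈ ξ, ∀ S' : ShortComplex C, Nonempty (S ≅ S') → S' ∈ ξ)
    {S : ShortComplex C} (hS : S.ShortExact) :
    hS.extClass ∈ EClass ξ S.X₃ S.X₁ ↔ S ∈ ξ := by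
  constructor
  · rintro ⟨B, f, g, w, hT, hTξ, h⟩
    exact hξ _ hTξ S (nonempty_iso_of_extClass_eq (w' := S.zero) hT hS h)
  · exact fun hSξ ↦ ⟨_, _, _, S.zero, hS, hSξ, rfl⟩

lemma IsProperClass.shortExactClass_EClass {ξ : Set (ShortComplex C)} (hξ : IsProperClass ξ) :
    shortExactClass (EClass ξ) = ξ := by
  ext S
  constructor
  · rintro ⟨hS, hmem⟩
    exact (extClass_mem_EClass_iff hξ.iso_closed hS).1 hmem
  · intro hSξ
    have hS := hξ.shortExact S hSξ
    exact ⟨hS, (extClass_mem_EClass_iff hξ.iso_closed hS).2 hSξ⟩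

lemma IsProperClass.isAddSubfunctor_EClass {ξ : Set (ShortComplex C)} (hξ : IsProperClass ξ) :
    IsAddSubfunctor (EClass ξ) where
  zero_mem Z A := by
    let s := ShortComplex.Splitting.ofHasBinaryBiproduct A Z
    have hs := s.shortExact
    rw [← extClass_eq_zero_of_splitting hs s]
    exact ⟨_, _, _, _, hs, hξ.split_mem _ ⟨s⟩, rfl⟩
  add_mem Z A := by
    rintro _ ⟨B, f, g, w, hS, hSξ, rfl⟩ _ ⟨B', f', g', w', hT, hTξ, rfl⟩
    have hST := shortExact_directSum hS hT
    have hmem : hST.extClass ∈ EClass ξ (Z ⊞ Z) (A ⊞ A) :=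
      ⟨_, _, _, _, hST, hξ.sum_mem _ hSξ _ hTξ, rfl⟩
    rw [extClass_add_extClass hS hT]
    exact hξ.cobase_change _ _ _ (hξ.base_change _ _ _ hmem Z _) A _
  neg_mem Z A δ hδ := by
    simpa [Ext.mk₀_neg] using hξ.cobase_change Z A δ hδ A (-𝟙 A)
  push Z A A' a δ hδ := hξ.cobase_change Z A δ hδ A' a
  pull Z Z' A c δ hδ := hξ.base_change Z A δ hδ Z' c

lemma IsAddSubfunctor.isProperClass_shortExactClass {F : ∀ Z A : C, Set (Ext Z A 1)}
    (hF : IsAddSubfunctor F) : IsProperClass (shortExactClass F) where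
  shortExact _ hS := hS.1
  iso_closed := by
    rintro S ⟨hS, hSF⟩ S' ⟨e⟩
    have hS' := ShortComplex.shortExact_of_iso e hS
    refine ⟨hS', ?_⟩
    rw [extClass_eq_of_iso hS hS' e]
    exact hF.pull _ _ _ _ _ (hF.push _ _ _ _ _ hSF)
  split_mem := by
    rintro S ⟨s⟩
    refine ⟨s.shortExact, ?_⟩
    rw [extClass_eq_zero_of_splitting _ s]
    exact hF.zero_mem _ _
  sum_mem := by
    rintro S ⟨hS, hSF⟩ T ⟨hT, hTF⟩
    have hST := shortExact_directSum hS hT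
    refine ⟨hST, Set.mem_of_eq_of_mem (extClass_directSum hS hT) ?_⟩
    exact hF.add_mem _ _ _ (hF.pull _ _ _ _ _ (hF.push _ _ _ _ _ hSF)) _
      (hF.pull _ _ _ _ _ (hF.push _ _ _ _ _ hTF))
  base_change Z A δ hδ Z' c := by
    rw [EClass_shortExactClass] at hδ ⊢
    exact hF.pull Z Z' A c δ hδ
  cobase_change Z A δ hδ A' a := by
    rw [EClass_shortExactClass] at hδ ⊢
    exact hF.push Z A A' a δ hδ

/-- The assignment `ξ ↦ E_ξ` is a bijection between proper classes of short exact
sequences and additive subfunctors of `Ext¹`: it lands in additive subfunctors,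
it is injective, and every additive subfunctor arises this way. -/
theorem properClass_equiv_addSubfunctor :
    (∀ ξ : Set (ShortComplex C), IsProperClass ξ → IsAddSubfunctor (EClass ξ)) ∧
    (∀ ξ₁ ξ₂ : Set (ShortComplex C), IsProperClass ξ₁ → IsProperClass ξ₂ →
      EClass ξ₁ = EClass ξ₂ → ξ₁ = ξ₂) ∧
    (∀ F : ∀ Z A : C, Set (Ext Z A 1), IsAddSubfunctor F →
      ∃ ξ : Set (ShortComplex C), IsProperClass ξ ∧ EClass ξ = F) :=
  ⟨fun _ hξ ↦ hξ.isAddSubfunctor_EClass,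
    fun ξ₁ ξ₂ h₁ h₂ h ↦ by rw [← h₁.shortExactClass_EClass, h, h₂.shortExactClass_EClass],
    fun F hF ↦ ⟨shortExactClass F, hF.isProperClass_shortExactClass, EClass_shortExactClass F⟩⟩
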